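/- arXiv:2407.17063 — 2 statements merged into one kernel-verified Lean document; each statement's English description precedes it below -/
import Mathlib

section
/- Let F = f + h be a coercive convex composite function on a real Hilbert space H, where f is convex differentiable with L-Lipschitz gradient and h is proper lower semicontinuous convex, with nonempty set of minimizers X* and minimum F*. Assume F satisfies the global quadratic growth condition G²_μ for some μ > 0: (μ/2)·d(x,X*)² ≤ F(x) − F* for all x ∈ H. Let α ≥ 3 + 3/√2 and κ = μ/L. Then there exists κ₀ > 0 such that whenever 0 < κ ≤ κ₀, the FISTA sequence (x_n) with step s = 1/L and inertial parameter α satisfies, for all n ≥ 3α/√κ: F(x_n) − F* ≤ (9/4)·e^{−2}·M₀·(8eα/(3√κ))^{2α/3}·n^{−2α/3}, where M₀ = F(x₀) − F*. -/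
open Filter Metric Topology

universe u

def EE (b m W s g r : ℝ) : ℝ :=
  (m+3*b)^2*W + (m^2+4*b*m)*s^2 + 2*b*m*g + 2*b*(1+b)*r^2

lemma step_alg (b n W0 s0 g0 r0 W1 s1 r1 : ℝ) (hb : 1 < b) (hn : 0 ≤ n)
    (hA : W1 + (r1^2 - r0^2) ≤ n/(n+3*b) * g0 + (n/(n+3*b) + (n/(n+3*b))^2) * s0^2)
    (hB : W1 + s1^2 ≤ W0 + (n/(n+3*b))^2*s0^2) :
    (1+(2*b-2)/(n+1)) * EE b (n+1) W1 s1 (r1^2-r0^2) r1 ≤ EE b n W0 s0 g0 r0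
      + 4*b*(b^2-1)/(n+1)*r1^2 + ((2*b-2)*(3*b)*(n+1+3*b)/(n+1) + 2*b-1)*W1 := by
  have hna : 0 < n+3*b := by linarith
  set a := n/(n+3*b) with ha
  have hta : (n+3*b)*a = n := by rw [ha]; field_simp
  have ha1 : a ≤ 1 := by rw [ha, div_le_one hna]; linarith
  have h1 := mul_le_mul_of_nonneg_left hA (by positivity : 0 ≤ 2*b*(n+3*b))
  have h2 := mul_le_mul_of_nonneg_left hB (by positivity : 0 ≤ (n+3*b)^2)
  have e1 : 2*b*(n+3*b)*(a*g0 + (a+a^2)*s0^2) = 2*b*n*g0 + 2*b*(n+n*a)*s0^2 := by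
    linear_combination (2*b*g0 + 2*b*(1+a)*s0^2) * hta
  have e2 : (n+3*b)^2*(W0+a^2*s0^2) = (n+3*b)^2*W0 + n^2*s0^2 := by
    linear_combination ((n+3*b)*a+n)*s0^2 * hta
  have e3 : 2*b*(n+n*a)*s0^2 ≤ 4*b*n*s0^2 := by
    have : 0 ≤ 2*b*n*s0^2 * (1-a) := mul_nonneg (by positivity) (by linarith)
    nlinarith
  rw [e1] at h1; rw [e2] at h2
  have key : (1+(2*b-2)/(n+1)) * EE b (n+1) W1 s1 (r1^2-r0^2) r1
      - 4*b*(b^2-1)/(n+1)*r1^2 - ((2*b-2)*(3*b)*(n+1+3*b)/(n+1) + 2*b-1)*W1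
      = ((n+3*b)^2+2*b*(n+3*b))*W1 + ((n+3*b)^2 - (b+1)^2)*s1^2 + 2*b*(n+3*b)*(r1^2-r0^2)
        + 2*b*(1+b)*r0^2 := by
    unfold EE; field_simp; ring
  have : 0 ≤ (b+1)^2*s1^2 := by positivity
  unfold EE at *
  nlinarith

lemma E_lower (b m q W s r r0 : ℝ) (hb : 1 < b) (hq : 0 < q) (hm : 9*b*q ≤ m)
    (hs : 0 ≤ s) (hr : 0 ≤ r) (hr0 : 0 ≤ r0) (hW : 0 ≤ W) (h1 : r0 ≤ r + s) (hrW : r^2 ≤ q^2*W) :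
    79/81*m^2*W ≤ EE b m W s (r^2-r0^2) r := by
  have hbq : 0 < b*q := by positivity
  have hm0 : 0 < m := by nlinarith
  have hg : -(2*r*s+s^2) ≤ r^2-r0^2 := by nlinarith
  have hg' := mul_le_mul_of_nonneg_left hg (by positivity : 0 ≤ 2*b*m)
  have h3 : 2*b*(b-1)*r^2 ≤ 2*b*(b-1)*(q^2*W) :=
    mul_le_mul_of_nonneg_left hrW (by nlinarith)
  have h4 : 2*b*(b-1)*(q^2*W) ≤ 2/81*m^2*W := by
    have : 81*(b*q)^2 ≤ m^2 := by nlinarith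
    have : 2*b*(b-1)*q^2 ≤ 2/81*m^2 := by nlinarith [sq_nonneg q, mul_pos hbq hq]
    nlinarith
  have h5 : 0 ≤ (m*s - 2*b*r)^2 := sq_nonneg _
  have h6 : m^2*W ≤ (m+3*b)^2*W := by
    apply mul_le_mul_of_nonneg_right _ hW
    nlinarith
  have h7 : 0 ≤ 2*b*m*s^2 := by positivity
  unfold EE
  nlinarith

lemma E_upper (b m q W s r r0 M : ℝ) (hb : 1.7 ≤ b) (hq : 100 ≤ q) (hm : 9*b*q ≤ m)
    (hs : 0 ≤ s) (hr : 0 ≤ r) (hr0 : 0 ≤ r0) (hW : 0 ≤ W) (h1 : r ≤ r0 + s) (h1' : r0 ≤ r + s)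
    (hrW : r^2 ≤ q^2*W)
    (hM : W + s^2 ≤ M) :
    EE b m W s (r^2-r0^2) r ≤ 3/2*m^2*M := by
  have hbq : 0 < b*q := by nlinarith
  have hm0 : 0 < m := by nlinarith
  have hb0 : 0 < b := by linarith
  have hq0 : 0 < q := by linarith
  have hg : r^2-r0^2 ≤ 2*r*s+s^2 := by nlinarith
  have hrs : 2*r*s ≤ q*(W+s^2) := by
    have : 0 ≤ (r - q*s)^2 := sq_nonneg _
    have : q*(2*r*s) ≤ q*(q*(W+s^2)) := by nlinarith
    exact le_of_mul_le_mul_left this hq0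
  have hbm : 900*b ≤ m := by nlinarith
  have hg' : 2*b*m*(r^2-r0^2) ≤ 2*b*m*(q*(W+s^2)+s^2) :=
    mul_le_mul_of_nonneg_left (by linarith) (by positivity)
  have c1 : (m+3*b)^2 ≤ 1.01*m^2 := by nlinarith
  have c2 : b*m ≤ m^2/900 := by nlinarith
  have c3 : b*m*q ≤ m^2/9 := by nlinarith
  have c4 : (b*q)^2 ≤ m^2/81 := by nlinarith
  have c5 : 2*b*(1+b)*r^2 ≤ 4*(b*q)^2*W := by
    have : 2*b*(1+b)*r^2 ≤ 2*b*(1+b)*(q^2*W) := mul_le_mul_of_nonneg_left hrW (by positivity)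
    have : 0 ≤ 2*b*(b-1)*(q^2*W) := mul_nonneg (by nlinarith) (by positivity)
    nlinarith
  have d1 := mul_le_mul_of_nonneg_right c1 hW
  have d2 := mul_le_mul_of_nonneg_right c2 (sq_nonneg s)
  have d3 := mul_le_mul_of_nonneg_right c3 (by positivity : 0 ≤ W+s^2)
  have d4 := mul_le_mul_of_nonneg_right c4 hW
  have d5 : 3/2*m^2*(W+s^2) ≤ 3/2*m^2*M := mul_le_mul_of_nonneg_left hM (by positivity)
  have d6 : 0 ≤ m^2*W := by positivity
  have d7 : 0 ≤ m^2*s^2 := by positivity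
  unfold EE
  nlinarith

lemma h3_alg (b q m : ℝ) (hm0 : 0 < m) (hm1 : 0 < m-1) :
    (2*b-2)/m - 1/(m-1)*(2*b-2) - 0.66*b^2*q/(m*(m-1)) - (2*b-2)^2/(m*(m-1))
        + b^2*q/(m-1) - b^2*q/m = (0.34*b^2*q - (2*b-2) - (2*b-2)^2)/(m*(m-1)) := by
  have a1 : m ≠ 0 := hm0.ne'
  have a2 : m-1 ≠ 0 := hm1.ne'
  clear hm0 hm1
  field_simp
  ring

set_option maxHeartbeats 1000000 in
/-- one step of the decay; `m = n+1`. -/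
lemma decay (b q m E0 E1 W r : ℝ) (hb : 1.7 ≤ b) (hq : 100 ≤ q) (hm : 9*b*q ≤ m-1)
    (hW : 0 ≤ W) (hrW : r^2 ≤ q^2*W) (hE1 : 79/81*m^2*W ≤ E1)
    (hst : (1+(2*b-2)/m) * E1 ≤ E0 + 4*b*(b^2-1)/m*r^2 + ((2*b-2)*(3*b)*(m+3*b)/m+2*b-1)*W) :
    m^(2*b-2) * E1 * Real.exp (b^2*q/m) ≤ (m-1)^(2*b-2) * E0 * Real.exp (b^2*q/(m-1)) := by
  have hb0 : 0 < b := by linarith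
  have hq0 : 0 < q := by linarith
  have hbq : 170 ≤ b*q := by nlinarith
  have hm1 : 0 < m-1 := by linarith
  have hm0 : 0 < m := by linarith
  have hbm : 900*b ≤ m-1 := by nlinarith
  have hE1' : 0 ≤ E1 := le_trans (by positivity) hE1
  -- the relative error
  obtain ⟨η, hη⟩ : ∃ η, η = 0.66*b^2*q/(m*(m-1)) := ⟨_, rfl⟩
  have herr : 4*b*(b^2-1)/m*r^2 + ((2*b-2)*(3*b)*(m+3*b)/m+2*b-1)*W ≤ η*E1 := by
    have t1 : 4*b*(b^2-1)/m*r^2 ≤ (4/9*b^2*q)*W := by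
      have : 4*b*(b^2-1)/m*r^2 ≤ 4*b*(b^2-1)/m*(q^2*W) :=
        mul_le_mul_of_nonneg_left hrW (div_nonneg (by nlinarith) hm0.le)
      refine this.trans ?_
      rw [← mul_assoc]
      apply mul_le_mul_of_nonneg_right _ hW
      rw [div_mul_eq_mul_div, div_le_iff₀ hm0]
      have : 4/9*b^2*q*(9*b*q) ≤ 4/9*b^2*q*m := mul_le_mul_of_nonneg_left (by linarith) (by positivity)
      have : 0 ≤ b*q^2 := by positivity
      nlinarith
    have t2 : ((2*b-2)*(3*b)*(m+3*b)/m+2*b-1) ≤ 7*b^2 := by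
      have : (2*b-2)*(3*b)*(m+3*b)/m ≤ (2*b-2)*(3*b)*1.01 := by
        rw [div_le_iff₀ hm0, mul_assoc _ (1.01:ℝ) m]
        apply mul_le_mul_of_nonneg_left _ (by nlinarith)
        nlinarith
      nlinarith
    have t3 : 7*b^2 ≤ 0.07*b^2*q := by nlinarith
    have t4 : 4*b*(b^2-1)/m*r^2 + ((2*b-2)*(3*b)*(m+3*b)/m+2*b-1)*W ≤ 0.52*b^2*q*W := by
      have := mul_le_mul_of_nonneg_right (t2.trans t3) hW
      have : 0 ≤ b^2*q*W := by positivity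
      nlinarith
    refine t4.trans ?_
    have t5 : 0.52*b^2*q*W ≤ 0.66*b^2*q/m^2 * (79/81*m^2*W) := by
      have : 0.66*b^2*q/m^2 * (79/81*m^2*W) = 0.66*79/81*(b^2*q*W) := by field_simp
      rw [this]
      have : 0 ≤ b^2*q*W := by positivity
      nlinarith
    refine t5.trans ?_
    have t6 : 0.66*b^2*q/m^2 ≤ η := by
      rw [hη]
      apply div_le_div_of_nonneg_left (by positivity) (by positivity)
      nlinarith
    refine mul_le_mul t6 hE1 (by positivity) (le_trans (by positivity) t6)
  obtain ⟨x, hx⟩ : ∃ x, x = (2*b-2)/m - η := ⟨_, rfl⟩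
  have hE : (1+x)*E1 ≤ E0 := by rw [hx]; nlinarith
  have hη0 : 0 ≤ η := by rw [hη]; positivity
  have hxp : x ≤ (2*b-2)/m := by linarith
  have hx0 : 0 ≤ x := by
    rw [hx, hη, sub_nonneg, div_le_div_iff₀ (by positivity) hm0]
    have : 0.66*b^2*q ≤ (2*b-2)*(m-1) := by
      have : (2*b-2)*(9*b*q) ≤ (2*b-2)*(m-1) := mul_le_mul_of_nonneg_left hm (by linarith)
      nlinarith
    nlinarith
  have hlog : x - x^2 ≤ Real.log (1+x) := by
    have h := Real.one_sub_inv_le_log_of_pos (by linarith : 0 < 1+x)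
    have : x - x^2 ≤ 1 - (1+x)⁻¹ := by
      have e : 1 - (1+x)⁻¹ = x/(1+x) := by field_simp; ring
      rw [e, le_div_iff₀ (by linarith)]
      nlinarith [pow_nonneg hx0 3]
    linarith
  have hlog2 : Real.log m ≤ Real.log (m-1) + 1/(m-1) := by
    have h := Real.log_le_sub_one_of_pos (by positivity : 0 < m/(m-1))
    rw [Real.log_div hm0.ne' hm1.ne'] at h
    have : m/(m-1) - 1 = 1/(m-1) := by field_simp; ring
    linarith
  have hp : 0 ≤ 2*b-2 := by linarith
  have hmain : Real.log m*(2*b-2) + b^2*q/m ≤ Real.log (m-1)*(2*b-2) + b^2*q/(m-1) + Real.log (1+x) := by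
    have h1 := mul_le_mul_of_nonneg_right hlog2 hp
    have h2 : x^2 ≤ ((2*b-2)/m)^2 := pow_le_pow_left₀ hx0 hxp 2
    have h2' : ((2*b-2)/m)^2 ≤ (2*b-2)^2/(m*(m-1)) := by
      rw [div_pow]
      apply div_le_div_of_nonneg_left (by positivity) (by positivity)
      nlinarith
    have h3 := h3_alg b q m hm0 hm1
    have h4 : 0 ≤ (0.34*b^2*q - (2*b-2) - (2*b-2)^2)/(m*(m-1)) := by
      apply div_nonneg _ (by positivity)
      nlinarith
    rw [hη] at hx
    linarith
  have hexp := Real.exp_le_exp.mpr hmain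
  rw [Real.exp_add, Real.exp_add, Real.exp_add, ← Real.rpow_def_of_pos hm0,
    ← Real.rpow_def_of_pos hm1, Real.exp_log (by linarith)] at hexp
  calc m^(2*b-2) * E1 * Real.exp (b^2*q/m) = (m^(2*b-2) * Real.exp (b^2*q/m)) * E1 := by ring
    _ ≤ ((m-1)^(2*b-2) * Real.exp (b^2*q/(m-1)) * (1+x)) * E1 := mul_le_mul_of_nonneg_right hexp hE1'
    _ = ((m-1)^(2*b-2) * Real.exp (b^2*q/(m-1))) * ((1+x) * E1) := by ring
    _ ≤ ((m-1)^(2*b-2) * Real.exp (b^2*q/(m-1))) * E0 := mul_le_mul_of_nonneg_left hE (by positivity)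
    _ = _ := by ring

lemma scalar_main (b q : ℝ) (hb : 1.7 ≤ b) (hq : 100 ≤ q) (W s r : ℕ → ℝ)
    (hW : ∀ n, 0 ≤ W n) (hs : ∀ n, 0 ≤ s n) (hr : ∀ n, 0 ≤ r n) (hs0 : s 0 = 0)
    (h1 : ∀ n, r n ≤ r (n-1) + s n) (h2 : ∀ n, r (n-1) ≤ r n + s n)
    (hrW : ∀ n, r n^2 ≤ q^2*W n)
    (hA : ∀ n : ℕ, W (n+1) + (r (n+1)^2 - r n^2) ≤ (n:ℝ)/(n+3*b) * (r n^2 - r (n-1)^2)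
      + ((n:ℝ)/(n+3*b) + ((n:ℝ)/(n+3*b))^2) * s n^2)
    (hB : ∀ n : ℕ, W (n+1) + s (n+1)^2 ≤ W n + ((n:ℝ)/(n+3*b))^2 * s n^2)
    (n : ℕ) (hn : 9*b*q ≤ n) :
    W n ≤ 9/4*Real.exp (-2) * W 0 * (8*Real.exp 1*b*q)^(2*b) * (n:ℝ)^(-(2*b)) := by
  have hb0 : 0 < b := by linarith
  have hq0 : 0 < q := by linarith
  have hM : ∀ n, W n + s n^2 ≤ W 0 := by
    intro n
    induction n with
    | zero => simp [hs0]
    | succ n ih =>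
      refine (hB n).trans (le_trans ?_ ih)
      have : ((n:ℝ)/(n+3*b))^2 ≤ 1 := by
        apply pow_le_one₀ (by positivity)
        rw [div_le_one (by positivity)]; linarith
      nlinarith [sq_nonneg (s n)]
  set E : ℕ → ℝ := fun n => EE b n (W n) (s n) (r n^2 - r (n-1)^2) (r n) with hE
  obtain ⟨k, hk⟩ : ∃ k, k = ⌈9*b*q⌉₊ := ⟨_, rfl⟩
  have hk1 : 9*b*q ≤ k := by rw [hk]; exact Nat.le_ceil _
  have hk2 : (k:ℝ) ≤ 10*b*q := by
    have := Nat.ceil_lt_add_one (by positivity : 0 ≤ 9*b*q)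
    rw [← hk] at this
    nlinarith
  have hkn : k ≤ n := by rw [hk]; exact Nat.ceil_le.mpr hn
  have hdec : (n:ℝ)^(2*b-2) * E n * Real.exp (b^2*q/n) ≤ (k:ℝ)^(2*b-2) * E k * Real.exp (b^2*q/k) := by
    clear hn
    induction n, hkn using Nat.le_induction with
    | base => exact le_rfl
    | succ n hkn ih =>
      refine le_trans ?_ ih
      have hn9 : 9*b*q ≤ n := hk1.trans (by exact_mod_cast hkn)
      have := decay b q ((n:ℝ)+1) (E n) (E (n+1)) (W (n+1)) (r (n+1)) hb hq (by linarith) (hW _) (hrW _)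
        (by
          have := E_lower b ((n:ℝ)+1) q (W (n+1)) (s (n+1)) (r (n+1)) (r n) (by linarith) hq0
            (by linarith) (hs _) (hr _) (hr _) (hW _) (by simpa using h2 (n+1)) (hrW _)
          simpa [hE] using this)
        (by
          have := step_alg b n (W n) (s n) (r n^2 - r (n-1)^2) (r n) (W (n+1)) (s (n+1)) (r (n+1))
            (by linarith) (by positivity) (hA n) (hB n)
          simpa [hE] using this)
      simpa using this
  have hElow : 79/81*(n:ℝ)^2*W n ≤ E n :=
    E_lower b n q (W n) (s n) (r n) (r (n-1)) (by linarith) hq0 hn (hs _) (hr _) (hr _) (hW _) (h2 n) (hrW _)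
  have hEup : E k ≤ 3/2*(k:ℝ)^2*W 0 :=
    E_upper b k q (W k) (s k) (r k) (r (k-1)) (W 0) hb hq hk1 (hs _) (hr _) (hr _) (hW _)
      (h1 k) (h2 k) (hrW _) (hM k)
  have hbq : 0 < b*q := by positivity
  have hk0 : 0 < (k:ℝ) := by linarith [mul_pos hb0 hq0]
  have hn0 : 0 < (n:ℝ) := by linarith [mul_pos hb0 hq0]
  have hexpk : Real.exp (b^2*q/k) ≤ Real.exp (b/9) := by
    apply Real.exp_le_exp.mpr
    rw [div_le_div_iff₀ hk0 (by norm_num)]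
    nlinarith
  have pw : ∀ t : ℝ, 0 < t → t^(2*b-2) * t^2 = t^(2*b) := by
    intro t ht
    rw [← Real.rpow_natCast t 2, ← Real.rpow_add ht]; norm_num
  have hfin : (n:ℝ)^(2*b) * W n ≤ 1.6 * Real.exp (b/9) * (k:ℝ)^(2*b) * W 0 := by
    have l1 : (n:ℝ)^(2*b-2) * (79/81*(n:ℝ)^2*W n) ≤ (n:ℝ)^(2*b-2) * E n * Real.exp (b^2*q/n) := by
      have a1 := mul_le_mul_of_nonneg_left hElow (by positivity : 0 ≤ (n:ℝ)^(2*b-2))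
      have a0 : 0 ≤ (n:ℝ)^(2*b-2) * E n :=
        le_trans (mul_nonneg (by positivity) (mul_nonneg (by positivity) (hW n))) a1
      have a2 : 1 ≤ Real.exp (b^2*q/n) := Real.one_le_exp (by positivity)
      nlinarith
    have l2 : (k:ℝ)^(2*b-2) * E k * Real.exp (b^2*q/k) ≤
        (k:ℝ)^(2*b-2) * (3/2*(k:ℝ)^2*W 0) * Real.exp (b/9) := by
      apply mul_le_mul _ hexpk (by positivity)
        (mul_nonneg (by positivity) (mul_nonneg (by positivity) (hW 0)))
      exact mul_le_mul_of_nonneg_left hEup (by positivity)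
    have l3 := l1.trans (hdec.trans l2)
    have e1 : (n:ℝ)^(2*b-2) * (79/81*(n:ℝ)^2*W n) = 79/81*((n:ℝ)^(2*b)*W n) := by
      rw [← pw n hn0]; ring
    have e2 : (k:ℝ)^(2*b-2) * (3/2*(k:ℝ)^2*W 0) * Real.exp (b/9)
        = 3/2*(Real.exp (b/9) * (k:ℝ)^(2*b) * W 0) := by
      rw [← pw k hk0]; ring
    rw [e1, e2] at l3
    have : 0 ≤ Real.exp (b/9) * (k:ℝ)^(2*b) * W 0 := mul_nonneg (by positivity) (hW 0)
    nlinarith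
  have hconst : 1.6 * Real.exp (b/9) * (k:ℝ)^(2*b) ≤ 9/4*Real.exp (-2) * (8*Real.exp 1*b*q)^(2*b) := by
    have c1 : (k:ℝ)^(2*b) ≤ (Real.exp (1/4) * (8*b*q))^(2*b) := by
      apply Real.rpow_le_rpow hk0.le _ (by positivity)
      have := Real.add_one_le_exp (1/4:ℝ)
      nlinarith
    have c2 : (Real.exp (1/4) * (8*b*q))^(2*b) = Real.exp (b/2) * (8*b*q)^(2*b) := by
      rw [Real.mul_rpow (by positivity) (by positivity), ← Real.exp_mul]; congr 2; ring
    have c3 : (8*Real.exp 1*b*q)^(2*b) = Real.exp (2*b) * (8*b*q)^(2*b) := by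
      rw [show 8*Real.exp 1*b*q = Real.exp 1 * (8*b*q) by ring,
        Real.mul_rpow (by positivity) (by positivity), ← Real.exp_mul]; congr 2; ring
    rw [c3]
    rw [c2] at c1
    calc 1.6 * Real.exp (b/9) * (k:ℝ)^(2*b) ≤ 9/4 * Real.exp (b/9) * (Real.exp (b/2) * (8*b*q)^(2*b)) := by
          apply mul_le_mul _ c1 (by positivity) (by positivity)
          apply mul_le_mul_of_nonneg_right (by norm_num) (by positivity)
      _ = 9/4 * (Real.exp (b/9+b/2)) * (8*b*q)^(2*b) := by rw [Real.exp_add]; ring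
      _ ≤ 9/4 * (Real.exp (-2+2*b)) * (8*b*q)^(2*b) := by
          apply mul_le_mul_of_nonneg_right _ (by positivity)
          apply mul_le_mul_of_nonneg_left _ (by norm_num)
          apply Real.exp_le_exp.mpr; linarith
      _ = _ := by rw [Real.exp_add]; ring
  rw [Real.rpow_neg hn0.le, ← div_eq_mul_inv, le_div_iff₀ (by positivity)]
  calc W n * (n:ℝ)^(2*b) = (n:ℝ)^(2*b) * W n := by ring
    _ ≤ _ := hfin
    _ ≤ _ := mul_le_mul_of_nonneg_right hconst (hW 0)
    _ = _ := by ring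

section analysis
variable {H : Type*} [NormedAddCommGroup H] [InnerProductSpace ℝ H] [CompleteSpace H]

lemma line_deriv (f : H → ℝ) (f' : H → H) (hf : ∀ z, HasGradientAt f (f' z) z) (y v : H) (t : ℝ) :
    HasDerivAt (fun t : ℝ => f (y + t • v)) (inner ℝ (f' (y + t • v)) v) t := by
  have h1 := (hf (y + t • v)).hasFDerivAt
  have h2 : HasDerivAt (fun t : ℝ => y + t • v) v t := by
    simpa using ((hasDerivAt_id t).smul_const v).const_add y
  have := h1.comp_hasDerivAt t h2
  rw [InnerProductSpace.toDual_apply_apply] at this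
  exact this

lemma descent (f : H → ℝ) (f' : H → H) (L : ℝ) (hL : 0 < L) (hf : ∀ z, HasGradientAt f (f' z) z)
    (hlip : LipschitzWith (Real.toNNReal L) f') (y x : H) :
    f x ≤ f y + inner ℝ (f' y) (x - y) + L/2*‖x-y‖^2 := by
  obtain ⟨v, hv⟩ : ∃ v, v = x - y := ⟨_, rfl⟩
  have hd : ∀ t : ℝ, HasDerivAt
      (fun t : ℝ => f (y + t • v) - t * inner ℝ (f' y) v - L/2*‖v‖^2*t^2)
      (inner ℝ (f' (y + t • v)) v - inner ℝ (f' y) v - L/2*‖v‖^2*(2*t)) t := by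
    intro t
    have h1 := line_deriv f f' hf y v t
    have h2 : HasDerivAt (fun t : ℝ => t * inner ℝ (f' y) v) (inner ℝ (f' y) v) t := by
      simpa using (hasDerivAt_id t).mul_const (inner ℝ (f' y) v)
    have h3 : HasDerivAt (fun t : ℝ => L/2*‖v‖^2*t^2) (L/2*‖v‖^2*(2*t)) t := by
      simpa using ((hasDerivAt_pow 2 t).const_mul (L/2*‖v‖^2))
    exact (h1.sub h2).sub h3
  have hanti : AntitoneOn (fun t : ℝ => f (y + t • v) - t * inner ℝ (f' y) v - L/2*‖v‖^2*t^2)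
      (Set.Icc 0 1) := by
    apply antitoneOn_of_deriv_nonpos (convex_Icc 0 1)
    · exact fun t _ => (hd t).continuousAt.continuousWithinAt
    · exact fun t _ => (hd t).differentiableAt.differentiableWithinAt
    · intro t ht
      rw [interior_Icc] at ht
      rw [(hd t).deriv, ← inner_sub_left]
      have h1 := real_inner_le_norm (f' (y + t • v) - f' y) v
      have h2 := hlip.dist_le_mul (y + t • v) y
      rw [dist_eq_norm, dist_eq_norm, Real.coe_toNNReal L hL.le, add_sub_cancel_left, norm_smul,
        Real.norm_of_nonneg ht.1.le] at h2
      have h3 := mul_le_mul_of_nonneg_right h2 (norm_nonneg v)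
      nlinarith
  have := hanti (Set.left_mem_Icc.mpr zero_le_one) (Set.right_mem_Icc.mpr zero_le_one) zero_le_one
  simp only [one_smul, zero_smul, add_zero] at this
  have hx : y + v = x := by rw [hv]; abel
  rw [hx] at this
  rw [← hv]
  linarith

lemma grad_ineq (f : H → ℝ) (f' : H → H) (hc : ConvexOn ℝ Set.univ f)
    (hf : ∀ z, HasGradientAt f (f' z) z) (y u : H) :
    f y + inner ℝ (f' y) (u - y) ≤ f u := by
  have hd := line_deriv f f' hf y (u-y) 0
  have hg : ConvexOn ℝ Set.univ (fun t : ℝ => f (y + t • (u-y))) := by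
    refine ⟨convex_univ, fun a _ c _ p q hp hq hpq => ?_⟩
    have := hc.2 (Set.mem_univ (y + a • (u-y))) (Set.mem_univ (y + c • (u-y))) hp hq hpq
    refine le_trans (le_of_eq ?_) this
    show f _ = f _
    congr 1
    simp only [smul_add, smul_smul, smul_eq_mul, add_smul]
    have : y = p • y + q • y := by rw [← add_smul, hpq, one_smul]
    nth_rewrite 1 [this]
    abel
  have := hg.le_slope_of_hasDerivAt (Set.mem_univ 0) (Set.mem_univ 1) zero_lt_one hd
  simp [slope_def_field] at this
  linarith

lemma prox_ineq (h : H → ℝ) (L : ℝ) (hL : 0 < L) (hc : ConvexOn ℝ Set.univ h) (z xp : H)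
    (hmin : ∀ w : H, (1/L)*h xp + ‖xp - z‖^2/2 ≤ (1/L)*h w + ‖w - z‖^2/2) (u : H) :
    (1/L)*h xp + ‖xp - z‖^2/2 + ‖u - xp‖^2/2 ≤ (1/L)*h u + ‖u - z‖^2/2 := by
  obtain ⟨A, hA⟩ : ∃ A, A = (1/L)*(h u - h xp) + inner ℝ (xp - z) (u - xp) := ⟨_, rfl⟩
  have hL' : 0 < 1/L := by positivity
  have hu : ‖u - z‖^2 = ‖xp - z‖^2 + 2*inner ℝ (xp - z) (u - xp) + ‖u - xp‖^2 := by
    rw [← norm_add_sq_real]; congr 2; abel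
  have key : ∀ t : ℝ, 0 < t → t ≤ 1 → 0 ≤ A + t*(‖u - xp‖^2/2) := by
    intro t ht ht1
    have h1 := hmin ((1-t) • xp + t • u)
    have h2 := hc.2 (Set.mem_univ xp) (Set.mem_univ u) (by linarith : 0 ≤ 1-t) ht.le (by ring)
    have h3 : ‖(1-t) • xp + t • u - z‖^2
        = ‖xp - z‖^2 + 2*(t*inner ℝ (xp - z) (u - xp)) + t^2*‖u - xp‖^2 := by
      have : (1-t) • xp + t • u - z = (xp - z) + t • (u - xp) := by
        rw [sub_smul, smul_sub, one_smul]; abel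
      rw [this, norm_add_sq_real, inner_smul_right, norm_smul, mul_pow, Real.norm_of_nonneg ht.le]
    rw [h3] at h1
    have h4 := mul_le_mul_of_nonneg_left h2 hL'.le
    simp only [smul_eq_mul] at h4
    have h5 : t * 0 ≤ t * (A + t*(‖u - xp‖^2/2)) := by rw [hA]; nlinarith
    exact le_of_mul_le_mul_left h5 ht
  have hA0 : 0 ≤ A := by
    by_contra hneg
    push Not at hneg
    have hB : 0 ≤ ‖u - xp‖^2/2 := by positivity
    obtain ⟨B, hBe⟩ : ∃ B, B = ‖u - xp‖^2/2 := ⟨_, rfl⟩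
    rw [← hBe] at hB key
    have := key (-A/(B + 1 - A)) (div_pos (by linarith) (by linarith))
      (by rw [div_le_one (by linarith)]; linarith)
    have h2 : A + -A/(B+1-A)*B = A*(1-A)/(B+1-A) := by
      have : B+1-A ≠ 0 := by linarith
      field_simp; ring
    rw [h2] at this
    have h3 : A*(1-A)/(B+1-A) < 0 := div_neg_of_neg_of_pos (by nlinarith) (by linarith)
    linarith
  rw [hA] at hA0
  rw [hu]
  linarith

lemma fb_ineq (f h : H → ℝ) (f' : H → H) (L : ℝ) (hL : 0 < L) (hfc : ConvexOn ℝ Set.univ f)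
    (hf : ∀ z, HasGradientAt f (f' z) z)
    (hlip : LipschitzWith (Real.toNNReal L) f') (hc : ConvexOn ℝ Set.univ h) (y z xp : H)
    (hz : z = y - (1/L) • f' y)
    (hmin : ∀ w : H, (1/L)*h xp + ‖xp - z‖^2/2 ≤ (1/L)*h w + ‖w - z‖^2/2) (u : H) :
    2/L*(f xp + h xp) + ‖xp - u‖^2 ≤ 2/L*(f u + h u) + ‖y - u‖^2 := by
  have h1 := prox_ineq h L hL hc z xp hmin u
  have h2 := descent f f' L hL hf hlip y xp
  have h3 := grad_ineq f f' hfc hf y u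
  have e : ∀ w : H, ‖w - z‖^2 = ‖w - y‖^2 + 2*((1/L)*inner ℝ (f' y) (w - y)) + ‖(1/L) • f' y‖^2 := by
    intro w
    rw [hz, show w - (y - (1/L) • f' y) = (w - y) + (1/L) • f' y by abel, norm_add_sq_real,
      inner_smul_right, real_inner_comm]
  rw [e xp, e u] at h1
  rw [norm_sub_rev xp u, norm_sub_rev y u]
  have hL' : 0 ≤ 1/L := by positivity
  have h4 := mul_le_mul_of_nonneg_left (h2.trans (add_le_add_left (add_le_add_left (le_refl (f y)) _) _)) hL'
  have h5 := mul_le_mul_of_nonneg_left h3 hL'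
  have h6 : (1/L)*(L/2*‖xp-y‖^2) = ‖xp-y‖^2/2 := by field_simp
  have h7 : ∀ c : ℝ, 2/L*c = 2*(1/L*c) := by intro c; ring
  rw [h7, h7]
  nlinarith

lemma fista_A (X : Set H) (hX : X.Nonempty) (W a : ℝ) (ha : 0 ≤ a) (x0 x1 x2 y : H)
    (hy : y = x1 + a • (x1 - x0))
    (hp : ∀ p ∈ X, W + ‖x2 - p‖^2 ≤ ‖y - p‖^2) :
    W + (infDist x2 X^2 - infDist x1 X^2) ≤ a * (infDist x1 X^2 - infDist x0 X^2)
      + (a + a^2) * ‖x1 - x0‖^2 := by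
  have key : ∀ t, infDist x1 X < t → W + infDist x2 X^2 + a * infDist x0 X^2 - (a + a^2) * ‖x1 - x0‖^2
      ≤ (1+a) * t^2 := by
    intro t ht
    obtain ⟨p, hpX, hpt⟩ := (infDist_lt_iff hX).mp ht
    have h1 := hp p hpX
    have h2 : infDist x2 X^2 ≤ ‖x2 - p‖^2 := by
      rw [← dist_eq_norm]
      exact pow_le_pow_left₀ infDist_nonneg (infDist_le_dist_of_mem hpX) 2
    have h3 : infDist x0 X^2 ≤ ‖x0 - p‖^2 := by
      rw [← dist_eq_norm]
      exact pow_le_pow_left₀ infDist_nonneg (infDist_le_dist_of_mem hpX) 2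
    have h4 : ‖x1 - p‖^2 ≤ t^2 := by
      rw [← dist_eq_norm]
      exact pow_le_pow_left₀ dist_nonneg hpt.le 2
    have e1 : ‖y - p‖^2 = ‖x1 - p‖^2 + 2*(a*inner ℝ (x1 - p) (x1 - x0)) + a^2*‖x1 - x0‖^2 := by
      rw [hy, show x1 + a • (x1 - x0) - p = (x1 - p) + a • (x1 - x0) by abel, norm_add_sq_real,
        inner_smul_right, norm_smul, mul_pow, Real.norm_of_nonneg ha]
    have e2 : ‖x0 - p‖^2 = ‖x1 - p‖^2 - 2*inner ℝ (x1 - p) (x1 - x0) + ‖x1 - x0‖^2 := by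
      rw [← norm_sub_sq_real]; congr 2; abel
    have h3' := mul_le_mul_of_nonneg_left h3 ha
    have h4' := mul_le_mul_of_nonneg_left h4 (by linarith : 0 ≤ 1 + a)
    rw [e1] at h1
    rw [e2] at h3'
    linarith
  have hlim : Tendsto (fun t : ℝ => (1+a)*t^2) (𝓝[>] (infDist x1 X)) (𝓝 ((1+a)*(infDist x1 X)^2)) := by
    have : Continuous (fun t : ℝ => (1+a)*t^2) := by fun_prop
    exact this.continuousWithinAt
  have := ge_of_tendsto hlim (eventually_nhdsWithin_of_forall fun t ht => key t ht)
  linarith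

end analysis

/-- FISTA under a global quadratic growth condition `G²_μ`: for `α ≥ 3 + 3/√2` there is a
threshold `κ₀ > 0` such that whenever the condition number `κ = μ/L` satisfies
`0 < κ ≤ κ₀`, the FISTA iterates with step `s = 1/L` satisfy, for all `n ≥ 3α/√κ`,
`F(xₙ) - F* ≤ (9/4) e⁻² M₀ (8eα/(3√κ))^{2α/3} n^{-2α/3}`, where `M₀ = F(x₀) - F*`. -/
theorem fista_global_quadratic_growth_rate (α : ℝ) (hα : 3 + 3 / Real.sqrt 2 ≤ α) :
    ∃ κ₀ : ℝ, 0 < κ₀ ∧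
      ∀ (H : Type u) [NormedAddCommGroup H] [InnerProductSpace ℝ H] [CompleteSpace H]
        (f h : H → ℝ) (L μ : ℝ), 0 < L → 0 < μ →
      ∀ f' : H → H,
        ConvexOn ℝ Set.univ f →
        (∀ z : H, HasGradientAt f (f' z) z) →
        LipschitzWith (Real.toNNReal L) f' →
        ConvexOn ℝ Set.univ h →
        LowerSemicontinuous h →
      ∀ F : H → ℝ, (∀ z : H, F z = f z + h z) →
        Tendsto F (Bornology.cobounded H) atTop →
      ∀ Xstar : Set H, Xstar = {z : H | ∀ w : H, F z ≤ F w} → Xstar.Nonempty →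
      ∀ Fstar : ℝ, (∀ z ∈ Xstar, F z = Fstar) →
        -- global quadratic growth condition `G²_μ`
        (∀ z : H, μ / 2 * infDist z Xstar ^ 2 ≤ F z - Fstar) →
      ∀ x y z : ℕ → H,
        (∀ n : ℕ, y n = x n + ((n : ℝ) / ((n : ℝ) + α)) • (x n - x (n - 1))) →
        (∀ n : ℕ, z n = y n - (1 / L) • f' (y n)) →
        (∀ n : ℕ, ∀ w : H,
          (1 / L) * h (x (n + 1)) + ‖x (n + 1) - z n‖ ^ 2 / 2
            ≤ (1 / L) * h w + ‖w - z n‖ ^ 2 / 2) →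
        0 < μ / L → μ / L ≤ κ₀ →
        ∀ n : ℕ, 3 * α / Real.sqrt (μ / L) ≤ (n : ℝ) →
          F (x n) - Fstar ≤
            (9 / 4) * Real.exp (-2) * (F (x 0) - Fstar) *
              (8 * Real.exp 1 / (3 * Real.sqrt (μ / L)) * α) ^ ((2 * α) / 3) *
              (n : ℝ) ^ (-(2 * α) / 3) := by
  refine ⟨1/10000, by norm_num, ?_⟩
  intro H _ _ _ f h L μ hL hμ f' hfc hf hlip hhc _ F hF _ X hXdef hX Fs hFs hgrow x y z hy hz hmin
    hκ hκ0 n hn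
  obtain ⟨b, hb⟩ : ∃ b, b = α/3 := ⟨_, rfl⟩
  have hαb : α = 3*b := by rw [hb]; ring
  have hb17 : 1.7 ≤ b := by
    have h2 : Real.sqrt 2 ≤ 1.42 := by
      rw [Real.sqrt_le_left (by norm_num)]; norm_num
    have h3 : 2.1 ≤ 3/Real.sqrt 2 := by
      rw [le_div_iff₀ (by positivity)]; linarith
    linarith
  obtain ⟨k, hk⟩ : ∃ k, k = Real.sqrt (μ/L) := ⟨_, rfl⟩
  have hk0 : 0 < k := by rw [hk]; exact Real.sqrt_pos.mpr hκ
  have hk2 : k^2 = μ/L := by rw [hk]; exact Real.sq_sqrt hκ.le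
  have hk1 : k ≤ 1/100 := by
    by_contra hc
    push Not at hc
    nlinarith
  rw [← hk] at hn ⊢
  have hq : 100 ≤ 1/k := by rw [le_div_iff₀ hk0]; linarith
  have hFsle : ∀ w, Fs ≤ F w := by
    intro w
    obtain ⟨p, hp⟩ := hX
    have h1 := hFs p hp
    rw [hXdef] at hp
    rw [← h1]; exact hp w
  have hfb : ∀ n u, 2/L*F (x (n+1)) + ‖x (n+1) - u‖^2 ≤ 2/L*F u + ‖y n - u‖^2 := by
    intro n u
    rw [hF, hF]
    exact fb_ineq f h f' L hL hfc hf hlip hhc (y n) (z n) (x (n+1)) (hz n) (hmin n) u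
  have hL2 : 0 < 2/L := by positivity
  have hb0 : 0 < b := by linarith
  have main := scalar_main b (1/k) hb17 hq (fun n => 2/L*(F (x n) - Fs))
    (fun n => ‖x n - x (n-1)‖) (fun n => infDist (x n) X)
    (fun n => mul_nonneg hL2.le (by linarith [hFsle (x n)])) (fun n => norm_nonneg _)
    (fun n => infDist_nonneg) (by simp)
    (fun n => by
      have := infDist_le_infDist_add_dist (s := X) (x := x n) (y := x (n-1))
      rwa [dist_eq_norm] at this)
    (fun n => by
      have := infDist_le_infDist_add_dist (s := X) (x := x (n-1)) (y := x n)
      rwa [dist_comm, dist_eq_norm] at this)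
    (fun n => by
      have h1 := hgrow (x n)
      have e : (1/k)^2*(2/L*(F (x n) - Fs)) = (F (x n) - Fs) * (2/μ) := by
        rw [div_pow, hk2]; field_simp
      show infDist (x n) X^2 ≤ (1/k)^2*(2/L*(F (x n) - Fs))
      rw [e]
      have h2 := mul_le_mul_of_nonneg_right h1 (by positivity : 0 ≤ 2/μ)
      have e2 : μ/2*infDist (x n) X^2*(2/μ) = infDist (x n) X^2 := by field_simp
      rwa [e2] at h2)
    (fun n => by
      refine fista_A X hX _ _ (by positivity) (x (n-1)) (x n) (x (n+1)) (y n)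
        (by rw [hy n, hαb]) ?_
      intro p hp
      have h1 := hfb n p
      rw [hFs p hp] at h1
      linarith)
    (fun n => by
      have h1 := hfb n (x n)
      have e : ‖y n - x n‖^2 = ((n:ℝ)/(n+3*b))^2*‖x n - x (n-1)‖^2 := by
        rw [hy n, hαb, add_sub_cancel_left, norm_smul, mul_pow, Real.norm_of_nonneg (by positivity)]
      rw [e] at h1
      simp only [Nat.add_sub_cancel]
      linarith)
    n (by
      refine le_trans (le_of_eq ?_) hn
      rw [hαb]; ring)
  have e1 : 8 * Real.exp 1 / (3 * k) * α = 8*Real.exp 1*b*(1/k) := by rw [hαb]; field_simp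
  have e2 : (2*α)/3 = 2*b := by rw [hαb]; ring
  have e3 : -(2*α)/3 = -(2*b) := by rw [hαb]; ring
  rw [e1, e2, e3]
  refine le_of_mul_le_mul_left (main.trans (le_of_eq ?_)) hL2
  ring
end

section
/- Let F = f + h be a convex composite function on a real Hilbert space H with nonempty closed convex set of minimizers X* and minimum F*, let (x_n) be the FISTA sequence with step s = 1/L and parameter α > 3, set λ = 2α/3, and define for n ≥ 1: w_n = (2/L)(F(x_n) − F*), δ_n = ‖x_n − x_{n−1}‖², h_n = ‖x_n − x_n^*‖², γ_n^* = ‖x_n^* − x_{n−1}^*‖², b_n = ‖λ(x_{n−1} − x_{n−1}^*) + n(x_n − x_{n−1})‖², and E_n = n²·w_n + b_n, where x_n^* is the projection of x_n onto X*. Then for every integer n > λ and all real numbers A, B: (1) δ_n ≤ 2·b_n/(n−λ)² + (8α²/9)·h_n/(n−λ)²; and (2) if moreover F satisfies the global quadratic growth condition G²_μ for some μ > 0 (i.e. (μ/2)·d(x,X*)² ≤ F(x) − F* for all x ∈ H) and κ = μ/L, then A·δ_n + B·(h_{n−1} − h_n) ≤ (2|A+B| + √2·|B|/√κ)·(1 +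 4α²/(9κn²))·E_n/(n−λ)² − B·γ_n^* + 2B·⟨x_{n−1} − x_{n−1}^*, x_n^* − x_{n−1}^*⟩. -/
open Filter Metric Topology RealInnerProductSpace

/-- Real-variable core of the estimate. -/
lemma aux_real (A B c κ n m lam W b hh δ I E : ℝ) (hκ : 0 < κ) (hn : 0 < n) (hm : 0 < m)
    (hmn : m ≤ n) (hδ0 : 0 ≤ δ) (hh0 : 0 ≤ hh) (hb0 : 0 ≤ b)
    (h1 : m ^ 2 * δ ≤ 2 * b + 2 * lam ^ 2 * hh) (h2 : n ^ 2 * κ * hh ≤ W)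
    (hI : |I| ^ 2 ≤ hh * δ) (hE : E = W + b) (hc : c = lam ^ 2 / (κ * n ^ 2)) :
    (A + B) * δ - 2 * B * I ≤
      (2 * |A + B| + Real.sqrt 2 * |B| / Real.sqrt κ) * (1 + c) * E / m ^ 2 := by
  have hc0 : 0 ≤ c := by rw [hc]; positivity
  have hW0 : 0 ≤ W := le_trans (by positivity) h2
  have h3 : lam ^ 2 * hh ≤ c * W := by
    have : lam ^ 2 * hh = c * (n ^ 2 * κ * hh) := by rw [hc]; field_simp
    rw [this]; exact mul_le_mul_of_nonneg_left h2 hc0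
  have h4 : W + b + c * W ≤ (1 + c) * E := by rw [hE]; nlinarith [mul_nonneg hc0 hb0]
  have h5 : m ^ 2 * δ ≤ 2 * ((1 + c) * E) := by linarith
  have hS : 0 < Real.sqrt κ := Real.sqrt_pos.2 hκ
  have hT : 0 < Real.sqrt 2 := by positivity
  have hS2 := Real.sq_sqrt hκ.le
  have hT2 := Real.sq_sqrt (show (0:ℝ) ≤ 2 by norm_num)
  have h6 : 2 * |I| ≤ Real.sqrt 2 / Real.sqrt κ * (κ * hh + δ / 2) := by
    apply abs_le_of_sq_le_sq' _ (by positivity) |>.2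
    have e : (Real.sqrt 2 / Real.sqrt κ * (κ * hh + δ / 2)) ^ 2
        = 2 / κ * (κ * hh + δ / 2) ^ 2 := by
      rw [mul_pow, div_pow, hS2, hT2]
    rw [e]
    have e2 : 2 / κ * (κ * hh + δ / 2) ^ 2 = 4 * (hh * δ) + 2 / κ * (κ * hh - δ / 2) ^ 2 := by
      field_simp; ring
    rw [e2]
    have : 0 ≤ 2 / κ * (κ * hh - δ / 2) ^ 2 := by positivity
    nlinarith
  have h7 : m ^ 2 * (κ * hh) ≤ W := by
    have : m ^ 2 ≤ n ^ 2 := by gcongr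
    have := mul_le_mul_of_nonneg_right this (mul_nonneg hκ.le hh0)
    linarith
  have h8 : m ^ 2 * (κ * hh + δ / 2) ≤ (1 + c) * E := by linarith
  have h9 : m ^ 2 * (2 * |I|) ≤ Real.sqrt 2 / Real.sqrt κ * ((1 + c) * E) := by
    calc m ^ 2 * (2 * |I|) ≤ m ^ 2 * (Real.sqrt 2 / Real.sqrt κ * (κ * hh + δ / 2)) := by gcongr
      _ = Real.sqrt 2 / Real.sqrt κ * (m ^ 2 * (κ * hh + δ / 2)) := by ring
      _ ≤ _ := by gcongr
  rw [le_div_iff₀ (by positivity)]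
  have a1 : (A + B) * (m ^ 2 * δ) ≤ |A + B| * (2 * ((1 + c) * E)) :=
    (mul_le_mul_of_nonneg_right (le_abs_self _) (by positivity)).trans
      (mul_le_mul_of_nonneg_left h5 (abs_nonneg _))
  have a2 : -(B * I) ≤ |B| * |I| := by rw [← abs_mul]; exact neg_le_abs _
  have a3 := mul_le_mul_of_nonneg_left h9 (abs_nonneg B)
  have a4 := mul_le_mul_of_nonneg_left a2 (sq_nonneg m)
  have e : (2 * |A + B| + Real.sqrt 2 * |B| / Real.sqrt κ) * (1 + c) * E
     = |A + B| * (2 * ((1 + c) * E)) + |B| * (Real.sqrt 2 / Real.sqrt κ * ((1 + c) * E)) := by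
    ring
  rw [e]
  linarith

lemma aux_proj {H : Type*} [NormedAddCommGroup H] [InnerProductSpace ℝ H]
    {K : Set H} (hK : Convex ℝ K) {u v : H} (hv : v ∈ K) (hmin : ∀ w ∈ K, ‖u - v‖ ≤ ‖u - w‖) :
    ∀ w ∈ K, ⟪u - v, w - v⟫ ≤ 0 := by
  apply (norm_eq_iInf_iff_real_inner_le_zero hK hv).1
  haveI : Nonempty K := ⟨⟨v, hv⟩⟩
  apply le_antisymm
  · exact le_ciInf fun w => hmin w w.2
  · exact ciInf_le (f := fun w : K => ‖u - w‖)
      ⟨0, by rintro _ ⟨w, rfl⟩; exact norm_nonneg _⟩ ⟨v, hv⟩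


open Filter Metric Topology RealInnerProductSpace

/-- Lemma `lemma_FISTA_AB` of the paper: with `λ = 2α/3`, `α > 3`,
`bₙ = ‖λ(xₙ₋₁ - xₙ₋₁*) + n(xₙ - xₙ₋₁)‖²` and `Eₙ = n² wₙ + bₙ`, for every `n > λ` and all
reals `A, B`: (1) `δₙ ≤ 2 bₙ/(n-λ)² + (8α²/9) hₙ/(n-λ)²`; (2) under the global quadratic
growth condition `G²_μ` (with `κ = μ/L`),
`A δₙ + B(hₙ₋₁ - hₙ) ≤ (2|A+B| + √2|B|/√κ)(1 + 4α²/(9κn²)) Eₙ/(n-λ)² - B γₙ*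
  + 2B ⟪xₙ₋₁ - xₙ₋₁*, xₙ* - xₙ₋₁*⟫`. -/
theorem fista_delta_energy_control
    {H : Type*} [NormedAddCommGroup H] [InnerProductSpace ℝ H] [CompleteSpace H]
    (f h : H → ℝ) (L : ℝ) (hL : 0 < L) (f' : H → H)
    (hf_conv : ConvexOn ℝ Set.univ f)
    (hf_grad : ∀ z : H, HasGradientAt f (f' z) z)
    (hf_lip : LipschitzWith (Real.toNNReal L) f')
    (hh_conv : ConvexOn ℝ Set.univ h)
    (hh_lsc : LowerSemicontinuous h)
    (F : H → ℝ) (hF : ∀ z : H, F z = f z + h z)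
    (Xstar : Set H) (hXstar : Xstar = {z : H | ∀ w : H, F z ≤ F w})
    (hXne : Xstar.Nonempty)
    (Fstar : ℝ) (hFstar : ∀ z ∈ Xstar, F z = Fstar)
    -- the FISTA sequence with step `s = 1/L` and inertial parameter `α`
    (α : ℝ) (hα : 3 < α) (lam : ℝ) (hlam : lam = 2 * α / 3)
    (x y z : ℕ → H)
    (hy : ∀ n : ℕ, y n = x n + ((n : ℝ) / ((n : ℝ) + α)) • (x n - x (n - 1)))
    (hz : ∀ n : ℕ, z n = y n - (1 / L) • f' (y n))
    (hprox : ∀ n : ℕ, ∀ w : H,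
      (1 / L) * h (x (n + 1)) + ‖x (n + 1) - z n‖ ^ 2 / 2
        ≤ (1 / L) * h w + ‖w - z n‖ ^ 2 / 2)
    -- `xstar n` is the projection of `x n` onto the closed convex set `X*`
    (xstar : ℕ → H)
    (hxstar : ∀ n : ℕ, xstar n ∈ Xstar ∧ ∀ w ∈ Xstar, ‖x n - xstar n‖ ≤ ‖x n - w‖)
    -- notation
    (w δ hseq γstar αseq : ℕ → ℝ)
    (hw : ∀ n : ℕ, w n = 2 / L * (F (x n) - Fstar))
    (hδ : ∀ n : ℕ, δ n = ‖x n - x (n - 1)‖ ^ 2)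
    (hhseq : ∀ n : ℕ, hseq n = ‖x n - xstar n‖ ^ 2)
    (hγstar : ∀ n : ℕ, γstar n = ‖xstar n - xstar (n - 1)‖ ^ 2)
    (hαseq : ∀ n : ℕ, αseq n = (n : ℝ) / ((n : ℝ) + α))
    (b E : ℕ → ℝ)
    (hb : ∀ n : ℕ,
      b n = ‖lam • (x (n - 1) - xstar (n - 1)) + (n : ℝ) • (x n - x (n - 1))‖ ^ 2)
    (hE : ∀ n : ℕ, E n = (n : ℝ) ^ 2 * w n + b n)
    (μ : ℝ) (hμ : 0 < μ) :
    ∀ n : ℕ, lam < (n : ℝ) → ∀ A B : ℝ,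
      (δ n ≤ 2 * b n / ((n : ℝ) - lam) ^ 2
          + (8 * α ^ 2 / 9) * hseq n / ((n : ℝ) - lam) ^ 2) ∧
      ((∀ v : H, μ / 2 * infDist v Xstar ^ 2 ≤ F v - Fstar) →
        A * δ n + B * (hseq (n - 1) - hseq n) ≤
          (2 * |A + B| + Real.sqrt 2 * |B| / Real.sqrt (μ / L))
              * (1 + 4 * α ^ 2 / (9 * (μ / L) * (n : ℝ) ^ 2)) * E n / ((n : ℝ) - lam) ^ 2
            - B * γstar n
            + 2 * B * ⟪x (n - 1) - xstar (n - 1), xstar n - xstar (n - 1)⟫) := by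
  intro n hn A B
  have hconv : Convex ℝ Xstar := by
    have hFc : ConvexOn ℝ Set.univ F := by
      have : F = f + h := funext hF
      rw [this]; exact hf_conv.add hh_conv
    obtain ⟨q, hq⟩ := hXne
    have : Xstar = {v ∈ Set.univ | F v ≤ F q} := by
      ext v
      simp only [hXstar, Set.mem_setOf_eq, Set.mem_univ, true_and] at hq ⊢
      exact ⟨fun hv => hv q, fun hv w => hv.trans (hq w)⟩
    rw [this]; exact hFc.convex_le _
  have hP := fun k => aux_proj hconv (hxstar k).1 (hxstar k).2
  have hlam0 : 0 < lam := by rw [hlam]; linarith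
  have hn0 : (0:ℝ) < n := hlam0.trans hn
  have hm : 0 < (n:ℝ) - lam := by linarith
  have p1 := hP n _ (hxstar (n - 1)).1
  have p2 := hP (n - 1) _ (hxstar n).1
  obtain ⟨u, hu⟩ : ∃ u, u = x (n - 1) - xstar (n - 1) := ⟨_, rfl⟩
  obtain ⟨p, hp⟩ : ∃ p, p = x n - xstar n := ⟨_, rfl⟩
  obtain ⟨g, hg⟩ : ∃ g, g = xstar n - xstar (n - 1) := ⟨_, rfl⟩
  obtain ⟨d, hd⟩ : ∃ d, d = x n - x (n - 1) := ⟨_, rfl⟩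
  have hug : u = p - d + g := by rw [hu, hp, hg, hd]; abel
  have hng : xstar (n - 1) - xstar n = -g := by rw [hg]; abel
  rw [hng, ← hp, inner_neg_right] at p1
  rw [← hu, ← hg, hug, inner_add_left, inner_sub_left, real_inner_self_eq_norm_sq] at p2
  have hdg : 0 ≤ ⟪d, g⟫ := by nlinarith [sq_nonneg ‖g‖]
  have hbn : b n = ‖lam • u + (n:ℝ) • d‖ ^ 2 := by rw [hb, hu, hd]
  have hδn : δ n = ‖d‖ ^ 2 := by rw [hδ, hd]
  have hhn : hseq n = ‖p‖ ^ 2 := by rw [hhseq, hp]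
  have hhn1 : hseq (n - 1) = ‖u‖ ^ 2 := by rw [hhseq, hu]
  have hγn : γstar n = ‖g‖ ^ 2 := by rw [hγstar, hg]
  have key : ((n:ℝ) - lam) ^ 2 * δ n ≤ 2 * b n + 2 * lam ^ 2 * hseq n := by
    have e1 : ((n:ℝ) - lam) • d + lam • g = (lam • u + (n:ℝ) • d) - lam • p := by
      rw [hug]; module
    have i1 : ‖((n:ℝ) - lam) • d + lam • g‖ ^ 2
        = ((n:ℝ) - lam) ^ 2 * ‖d‖ ^ 2 + 2 * (((n:ℝ) - lam) * lam * ⟪d, g⟫)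
          + lam ^ 2 * ‖g‖ ^ 2 := by
      rw [norm_add_sq_real, norm_smul, norm_smul, real_inner_smul_left, real_inner_smul_right,
        mul_pow, mul_pow, Real.norm_eq_abs, Real.norm_eq_abs, sq_abs, sq_abs]
      ring
    have i2 := parallelogram_law_with_norm ℝ (lam • u + (n:ℝ) • d) (lam • p)
    have i3 : ‖lam • p‖ ^ 2 = lam ^ 2 * ‖p‖ ^ 2 := by
      rw [norm_smul, mul_pow, Real.norm_eq_abs, sq_abs]
    rw [← e1] at i2
    rw [hδn, hbn, hhn]
    have j1 : 0 ≤ ((n:ℝ) - lam) * lam * ⟪d, g⟫ := by positivity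
    have j2 : 0 ≤ lam ^ 2 * ‖g‖ ^ 2 := by positivity
    nlinarith [sq_nonneg ‖(lam • u + (n:ℝ) • d) + lam • p‖]
  refine ⟨?_, fun hG => ?_⟩
  · rw [← add_div, le_div_iff₀ (by positivity)]
    have : lam ^ 2 = 4 * α ^ 2 / 9 := by rw [hlam]; ring
    rw [this] at key
    linarith
  · have hκ : 0 < μ / L := div_pos hμ hL
    have hdist : ‖p‖ ≤ infDist (x n) Xstar := by
      rw [le_infDist hXne]
      intro v hv
      rw [dist_eq_norm, hp]
      exact (hxstar n).2 v hv
    have hgrow : (n:ℝ) ^ 2 * (μ / L) * hseq n ≤ (n:ℝ) ^ 2 * w n := by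
      have g1 : μ / 2 * ‖p‖ ^ 2 ≤ F (x n) - Fstar := by
        refine le_trans ?_ (hG (x n))
        gcongr
      rw [mul_assoc]
      refine mul_le_mul_of_nonneg_left ?_ (by positivity)
      rw [hw, hhn]
      calc μ / L * ‖p‖ ^ 2 = 2 / L * (μ / 2 * ‖p‖ ^ 2) := by field_simp
        _ ≤ _ := by gcongr
    have hI : |⟪p, d⟫| ^ 2 ≤ hseq n * δ n := by
      rw [hhn, hδn, ← mul_pow]
      gcongr
      exact abs_real_inner_le_norm p d
    have main := aux_real A B (4 * α ^ 2 / (9 * (μ / L) * (n : ℝ) ^ 2)) (μ / L) n (n - lam) lam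
      ((n:ℝ) ^ 2 * w n) (b n) (hseq n) (δ n) ⟪p, d⟫ (E n) hκ hn0 hm (by linarith)
      (by rw [hδn]; positivity) (by rw [hhn]; positivity) (by rw [hbn]; positivity)
      key hgrow hI (hE n) (by rw [hlam]; field_simp; norm_num)
    have hid : ‖u‖ ^ 2 - ‖p‖ ^ 2 = ‖d‖ ^ 2 - 2 * ⟪p, d⟫ - ‖g‖ ^ 2 + 2 * ⟪u, g⟫ := by
      have e1 : ‖u - g‖ ^ 2 = ‖p - d‖ ^ 2 := by rw [hug, add_sub_cancel_right]
      rw [norm_sub_sq_real, norm_sub_sq_real] at e1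
      linarith
    rw [← hu, ← hg, hhn1, hhn, hid, hγn, ← hδn]
    linarith
end
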